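/- arXiv:2101.06753 — 2 statements merged into one kernel-verified Lean document; each statement's English description precedes it below -/
import Mathlib

section
/- Let F be a field in which 2 is invertible, and let q ∈ F be such that q^{2n} ≠ 1 for every integer n ≥ 1. Define G : ℤ⁴ → F by G(a,b,c,d) = 0 if a > c or b < d, and otherwise G(a,b,c,d) = 2^{a-c} · q^{(a-c)(a+c-4d-1)/2} · (q^{2(b-d+1)}; q²)_{c-a} · (−q^{2(a-b-d)}; q²)_{c-a} / (q²; q²)_{c-a}. Then: (i) G(a,b,a,d) = 1 for all integers a and all b ≥ d; and (ii) for all integers a, b, c, d with a ≤ c, b ≥ d and (a,b) ≠ (c,d), one has G(a,b,c,d) = ((q^{a-2b} + q^{2b-a})/2) · G(a+1,b,c,d) + G(a,b-1,c,d). -/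
/-!
Write `Q = q²`, `c = a + n + 1`, `X = q^{2(b-d)}`, `y = -q^{2(a-b-d)}`. The three values of the
closed form in the recursion share the factor `(XQ; Q)_n (yQ; Q)_n / (Q; Q)_n`, up to powers of `2`
and `q`. Splitting off the first or last factor of each Pochhammer symbol and using
`(q^{a-2b} + q^{2b-a}) q^{a-2d} = X - y`, the recursion becomes, with `T = Q^{n+1}`,
`(1 - XT)(1 - y) = (X - y)(1 - T) + (1 - X)(1 - yT)`, a polynomial identity.

On the boundary `b = d` the term `G(a, b-1, c, d)` is zero by definition, which agrees with the
product formula because `(1; Q)_{n+1} = 0`; hence no separate case is needed (`latticeGF_eq_prod`).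
-/

/-- The q-Pochhammer symbol `(x; Q)_n = ∏_{l=0}^{n-1} (1 - x Q^l)`. -/
def qPoch {F : Type*} [Field F] (x Q : F) (n : ℕ) : F :=
  ∏ l ∈ Finset.range n, (1 - x * Q ^ l)

/-- The closed form for the generating function of weighted lattice paths from `(a,b)` to
`(c,d)`: zero if `a > c` or `b < d`, and otherwise
`2^{a-c} q^{(a-c)(a+c-4d-1)/2} (q^{2(b-d+1)}; q²)_{c-a} (−q^{2(a-b-d)}; q²)_{c-a} / (q²; q²)_{c-a}`. -/
def latticeGF {F : Type*} [Field F] (q : F) (a b c d : ℤ) : F :=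
  if c < a ∨ b < d then 0
  else (2 : F) ^ (a - c) * q ^ ((a - c) * (a + c - 4 * d - 1) / 2)
    * qPoch (q ^ (2 * (b - d + 1))) (q ^ 2) (c - a).toNat
    * qPoch (-q ^ (2 * (a - b - d))) (q ^ 2) (c - a).toNat
    / qPoch (q ^ 2) (q ^ 2) (c - a).toNat

lemma qPoch_succ_last {F : Type*} [Field F] (x Q : F) (n : ℕ) :
    qPoch x Q (n + 1) = qPoch x Q n * (1 - x * Q ^ n) := by
  simp [qPoch, Finset.prod_range_succ]

lemma qPoch_succ_first {F : Type*} [Field F] (x Q : F) (n : ℕ) :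
    qPoch x Q (n + 1) = (1 - x) * qPoch (x * Q) Q n := by
  simp only [qPoch, Finset.prod_range_succ', pow_zero, mul_one]
  rw [mul_comm]
  congr 1
  refine Finset.prod_congr rfl fun l _ => ?_
  ring

/-- For a path with `n` right-steps, the product formula holds without case distinction when
`d ≤ b`, and also on the row `b = d - 1` when `n ≥ 1`, where both sides vanish. -/
lemma latticeGF_eq_prod {F : Type*} [Field F] (q : F) (a b c d : ℤ) (n : ℕ) (hc : c = a + n)
    (hb : d ≤ b ∨ d = b + 1 ∧ 1 ≤ n) :
    latticeGF q a b c d = (2 : F) ^ (a - c) * q ^ ((a - c) * (a + c - 4 * d - 1) / 2)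
      * qPoch (q ^ (2 * (b - d + 1))) (q ^ 2) n
      * qPoch (-q ^ (2 * (a - b - d))) (q ^ 2) n / qPoch (q ^ 2) (q ^ 2) n := by
  have hn : (c - a).toNat = n := by omega
  rcases hb with hb | ⟨rfl, hn1⟩
  · rw [latticeGF, if_neg (by omega), hn]
  · obtain ⟨m, rfl⟩ : ∃ m, n = m + 1 := ⟨n - 1, by omega⟩
    rw [latticeGF, if_pos (by omega), qPoch_succ_first (q ^ (2 * (b - (b + 1) + 1)))]
    simp

/-- The closed form `latticeGF` satisfies the defining recursion of the generating function
of lattice paths with unit right- and down-steps, where a right-step from `(x,y)` to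
`(x+1,y)` has weight `(q^{x-2y} + q^{2y-x})/2`:
(i) `G(a,b,a,d) = 1` whenever `b ≥ d`; and
(ii) `G(a,b,c,d) = ((q^{a-2b} + q^{2b-a})/2) G(a+1,b,c,d) + G(a,b-1,c,d)`
whenever `a ≤ c`, `b ≥ d` and `(a,b) ≠ (c,d)`. -/
theorem latticeGF_recursion {F : Type*} [Field F] (q : F) (hq : q ≠ 0) (h2 : (2 : F) ≠ 0)
    (hroot : ∀ n : ℕ, 1 ≤ n → q ^ (2 * n) ≠ 1) :
    (∀ a b d : ℤ, d ≤ b → latticeGF q a b a d = 1) ∧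
    (∀ a b c d : ℤ, a ≤ c → d ≤ b → (a, b) ≠ (c, d) →
      latticeGF q a b c d
        = (q ^ (a - 2 * b) + q ^ (2 * b - a)) / 2 * latticeGF q (a + 1) b c d
          + latticeGF q a (b - 1) c d) := by
  have base : ∀ a b d : ℤ, d ≤ b → latticeGF q a b a d = 1 := by
    intro a b d h
    rw [latticeGF, if_neg (by omega)]
    simp [qPoch]
  refine ⟨base, fun a b c d hac hdb hne => ?_⟩
  rcases hac.eq_or_lt with rfl | hlt
  · have hb : d ≤ b - 1 := by
      have : b ≠ d := fun h => hne (by rw [h])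
      omega
    rw [base a b d hdb, base a (b - 1) d hb, latticeGF, if_pos (by omega)]
    ring
  obtain ⟨n, hn⟩ : ∃ n : ℕ, c = a + 1 + n := ⟨(c - (a + 1)).toNat, by omega⟩
  rw [latticeGF_eq_prod q a b c d (n + 1) (by push_cast; omega) (by omega),
    latticeGF_eq_prod q (a + 1) b c d n hn (by omega),
    latticeGF_eq_prod q a (b - 1) c d (n + 1) (by push_cast; omega) (by omega)]
  have hQ : qPoch (q ^ 2) (q ^ 2) n ≠ 0 := by
    refine Finset.prod_ne_zero_iff.2 fun l _ h => hroot (l + 1) (by omega) ?_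
    rw [pow_mul, pow_succ', ← sub_eq_zero, ← neg_eq_zero, neg_sub, h]
  have hT : 1 - q ^ 2 * (q ^ 2) ^ n ≠ 0 := by
    intro h
    refine hroot (n + 1) (by omega) ?_
    rw [pow_mul, pow_succ', ← sub_eq_zero, ← neg_eq_zero, neg_sub, h]
  -- The exponent of `q` in the prefactor grows by `a - 2d` when `a` grows by one.
  have hE : (a + 1 - c) * (a + 1 + c - 4 * d - 1) / 2
      = (a - c) * (a + c - 4 * d - 1) / 2 + (a - 2 * d) := by
    rw [← Int.add_mul_ediv_right _ _ two_ne_zero]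
    congr 1
    ring
  have e2 : (2 : F) ^ (a + 1 - c) = 2 ^ (a - c) * 2 := by
    rw [← zpow_add_one₀ h2]
    congr 1
    ring
  have ex : q ^ (2 * (b - d + 1)) = q ^ (2 * (b - d)) * q ^ 2 := by
    rw [← zpow_natCast q 2, ← zpow_add₀ hq]
    congr 1
    push_cast
    ring
  have ex' : 2 * (b - 1 - d + 1) = 2 * (b - d) := by ring
  have ey (s t : ℤ) (h : s = a - b - d + 1) (ht : t = 2 * s) :
      -q ^ t = -q ^ (2 * (a - b - d)) * q ^ 2 := by
    rw [neg_mul, ← zpow_natCast q 2, ← zpow_add₀ hq, ht, h]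
    congr 2
    push_cast
    ring
  have hw : (q ^ (a - 2 * b) + q ^ (2 * b - a)) * q ^ (a - 2 * d)
      = q ^ (2 * (b - d)) + q ^ (2 * (a - b - d)) := by
    rw [add_mul, ← zpow_add₀ hq, ← zpow_add₀ hq, add_comm]
    congr 2 <;> ring
  rw [hE, zpow_add₀ hq, e2, ex', ey (a + 1 - b - d) _ (by ring) rfl,
    ey (a - (b - 1) - d) _ (by ring) rfl, ex,
    qPoch_succ_last (q ^ (2 * (b - d)) * q ^ 2), qPoch_succ_first (-q ^ (2 * (a - b - d))),
    qPoch_succ_first (q ^ (2 * (b - d))), qPoch_succ_last (-q ^ (2 * (a - b - d)) * q ^ 2),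
    qPoch_succ_last (q ^ 2)]
  generalize qPoch (q ^ 2) (q ^ 2) n = P at *
  generalize qPoch (q ^ (2 * (b - d)) * q ^ 2) (q ^ 2) n = A
  generalize qPoch (-q ^ (2 * (a - b - d)) * q ^ 2) (q ^ 2) n = B
  generalize q ^ (2 * (b - d)) = X at *
  generalize q ^ (2 * (a - b - d)) = y at *
  generalize (q ^ 2) ^ n = S at *
  generalize q ^ 2 = Q at *
  generalize q ^ (a - 2 * b) + q ^ (2 * b - a) = w at *
  generalize q ^ (a - 2 * d) = v at *
  generalize q ^ ((a - c) * (a + c - 4 * d - 1) / 2) = E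
  generalize (2 : F) ^ (a - c) = D
  have key : w / 2 * (D * 2 * (E * v) * A * B / P)
      = D * E * A * B * (X + y) * (1 - Q * S) / (P * (1 - Q * S)) := by
    rw [← hw]
    field_simp
  rw [key, ← add_div]
  congr 1
  ring
end

section
/- Let F be a field in which 2 is invertible, let q ∈ F be such that q^{2n} ≠ 1 for every integer n ≥ 1, let m ≥ 1 and k ≥ 0 be integers, and let a_1 < a_2 < ... < a_m be strictly increasing integers. Define the m×m matrix G with (i,j)-entry G_{ij} = 2^{2i-k-2m} · q^{(2i-k-2m)(2i+k+2m-4a_j-3)/2} · (q^{4(i-a_j)}; q⁴)_{2m+k-2i} / (q²; q²)_{2m+k-2i}. Then det G = ( ∏_{i=1}^m 2^{2i-k-2m} q^{(2i-k-2m)(2i+k+2m-3)/2} / (q²; q²)_{2m+k-2i} ) · ( ∏_{j=1}^m q^{2 a_j (k+2m)} ) · q^{4( m(m-1)(2m+k-1)/2 − Σ_{l=1}^m a_l (2m-l) )} · ( ∏_{j=1}^m (q^{4(m-a_j)}; q⁴)_k ) · ∏_{1 ≤ i < j ≤ m} (1 − q^{4(a_i−a_j)})(1 − q^{4(−2m−k+1+a_i+a_j)}).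 -/
open Polynomial in
/-- Vandermonde determinant for monic polynomials whose degrees decrease from `m - 1` to `0`. -/
lemma det_eval_descending {R : Type*} [CommRing R] {m : ℕ} (y : Fin m → R)
    (p : Fin m → R[X]) (hdeg : ∀ i, (p i).natDegree = m - 1 - (i : ℕ)) (hp : ∀ i, (p i).Monic) :
    Matrix.det (Matrix.of fun i j : Fin m => (p i).eval (y j))
      = ∏ i : Fin m, ∏ j ∈ Finset.Ioi i, (y i - y j) := by
  have h := Matrix.det_eval_matrixOfPolynomials_eq_det_vandermonde
    (fun i => y (Fin.rev i)) (fun i => p (Fin.rev i))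
    (fun i => by rw [hdeg, Fin.val_rev]; omega) (fun i => hp _)
  rw [Matrix.det_vandermonde] at h
  -- Reversing both index sets turns descending degrees into ascending ones, without a sign.
  rw [← Matrix.det_submatrix_equiv_self Fin.revPerm, ← Matrix.det_transpose]
  refine Eq.trans h.symm ?_
  rw [Finset.prod_sigma', Finset.prod_sigma']
  refine Finset.prod_bij' (fun s _ => ⟨Fin.rev s.2, Fin.rev s.1⟩)
    (fun s _ => ⟨Fin.rev s.2, Fin.rev s.1⟩) ?_ ?_ ?_ ?_ ?_ <;> simp

/-- Peeling `d` factors off either end of `(x Q^i; Q)_{2d+k}`, paired from the outside in. -/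
lemma qPoch_split {F : Type*} [Field F] (x Q : F) (k d i : ℕ) :
    qPoch (x * Q ^ i) Q (2 * d + k) = qPoch (x * Q ^ (i + d)) Q k
      * ∏ l ∈ Finset.range d,
          ((1 - x * Q ^ (i + l)) * (1 - x * Q ^ (2 * (i + d) + k - 1 - (i + l)))) := by
  induction d generalizing i with
  | zero => simp
  | succ d ih =>
    have h := ih (i + 1)
    rw [Finset.prod_range_succ']
    have e : ∀ l, l ∈ Finset.range d →
        ((1 - x * Q ^ (i + (l + 1)))
          * (1 - x * Q ^ (2 * (i + (d + 1)) + k - 1 - (i + (l + 1)))))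
        = ((1 - x * Q ^ (i + 1 + l)) * (1 - x * Q ^ (2 * (i + 1 + d) + k - 1 - (i + 1 + l)))) := by
      intro l _
      rw [show i + (l + 1) = i + 1 + l by omega, show i + (d + 1) = i + 1 + d by omega]
    rw [Finset.prod_congr rfl e, show i + (d + 1) = i + 1 + d by omega, ← mul_assoc, ← h,
      show 2 * (d + 1) + k = (2 * d + k + 1) + 1 by omega]
    unfold qPoch
    rw [Finset.prod_range_succ, Finset.prod_range_succ',
      show 2 * (i + 1 + d) + k - 1 - (i + 0) = i + (2 * d + k + 1) by omega]
    have e2 : ∀ l, l ∈ Finset.range (2 * d + k) →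
        1 - x * Q ^ i * Q ^ (l + 1) = 1 - x * Q ^ (i + 1) * Q ^ l := by
      intro l _; ring
    rw [Finset.prod_congr rfl e2]
    ring

/-- A product over pairs `i < j` of terms depending only on `i`: the index `i` (0-based) occurs as the smaller one in `m - 1 - i` pairs. -/
lemma prod_pairs_zpow {F : Type*} [Field F] (q : F) (hq : q ≠ 0) (m : ℕ) (b : Fin m → ℤ) (c : ℤ) :
    (∏ i : Fin m, ∏ _j ∈ Finset.Ioi i, q ^ (b i + c))
      = q ^ (∑ i : Fin m, b i * ((m : ℤ) - 1 - i) + ((m * (m - 1) / 2 : ℕ) : ℤ) * c) := by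
  have hz : ∀ f : Fin m → ℤ, ∏ i, q ^ f i = q ^ ∑ i, f i := by
    intro f
    have h : ∀ s : Finset (Fin m), ∏ i ∈ s, q ^ f i = q ^ ∑ i ∈ s, f i := by
      intro s
      induction s using Finset.induction_on with
      | empty => simp
      | insert a s ha ih => rw [Finset.prod_insert ha, Finset.sum_insert ha, ih, zpow_add₀ hq]
    exact h _
  have hs : ∑ i : Fin m, ((m : ℤ) - 1 - i) = ((m * (m - 1) / 2 : ℕ) : ℤ) := by
    rw [← Finset.sum_range_id, Finset.sum_range, Nat.cast_sum,
      ← Equiv.sum_comp Fin.revPerm]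
    refine Finset.sum_congr rfl fun i _ => ?_
    have := i.2
    simp only [Fin.revPerm_apply, Fin.val_rev]
    omega
  have e : ∀ i : Fin m, (∏ _j ∈ Finset.Ioi i, q ^ (b i + c))
      = q ^ (b i * ((m : ℤ) - 1 - i) + ((m : ℤ) - 1 - i) * c) := by
    intro i
    rw [Finset.prod_const, Fin.card_Ioi, ← zpow_natCast, ← zpow_mul]
    congr 1
    have := i.2
    rw [Nat.sub_sub, Nat.cast_sub (by omega)]
    push_cast
    ring
  rw [Finset.prod_congr rfl fun i _ => e i, hz, Finset.sum_add_distrib, ← Finset.sum_mul, hs]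

open Polynomial in
/-- The determinant after extracting the row constants and the factors `q^{2 a_j (k + 2m)}`. -/
lemma det_core {F : Type*} [Field F] (Q : F) (m k : ℕ) (x : Fin m → F) (hx : ∀ j, x j ≠ 0) :
    Matrix.det (Matrix.of fun i j : Fin m =>
        x j ^ ((i : ℕ) + 1) * qPoch (x j * Q ^ ((i : ℕ) + 1)) Q (2 * m + k - 2 * ((i : ℕ) + 1)))
      = (∏ j, x j ^ m * qPoch (x j * Q ^ m) Q k)
        * ∏ i : Fin m, ∏ j ∈ Finset.Ioi i,
          (((x i)⁻¹ + x i * Q ^ (2 * m + k - 1)) - ((x j)⁻¹ + x j * Q ^ (2 * m + k - 1))) := by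
  set r : ℕ → ℕ → F := fun i l => Q ^ (i + 1 + l) + Q ^ (2 * m + k - 1 - (i + 1 + l)) with hr
  rw [← det_eval_descending (fun j => (x j)⁻¹ + x j * Q ^ (2 * m + k - 1))
    (fun i => ∏ l ∈ Finset.range (m - 1 - (i : ℕ)), (X - C (r i l)))
    (fun i => by rw [natDegree_finsetProd_X_sub_C_eq_card]; simp)
    (fun i => monic_prod_X_sub_C _ _), ← Matrix.det_mul_row]
  congr 1
  ext i j
  have hi := i.2
  simp only [Matrix.of_apply, eval_prod, eval_sub, eval_X, eval_C]
  rw [show 2 * m + k - 2 * ((i : ℕ) + 1) = 2 * (m - 1 - i) + k by omega, qPoch_split,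
    show (i : ℕ) + 1 + (m - 1 - i) = m by omega]
  have e : ∀ l, l ∈ Finset.range (m - 1 - (i : ℕ)) →
      (1 - x j * Q ^ ((i : ℕ) + 1 + l)) * (1 - x j * Q ^ (2 * m + k - 1 - ((i : ℕ) + 1 + l)))
      = x j * ((x j)⁻¹ + x j * Q ^ (2 * m + k - 1) - r i l) := by
    intro l hl
    rw [Finset.mem_range] at hl
    have hN : Q ^ (2 * m + k - 1)
        = Q ^ ((i : ℕ) + 1 + l) * Q ^ (2 * m + k - 1 - ((i : ℕ) + 1 + l)) := by
      rw [← pow_add]; congr 1; omega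
    rw [hN]
    simp only [hr]
    field_simp [hx j]
    ring
  rw [Finset.prod_congr rfl e, Finset.prod_mul_distrib, Finset.prod_const, Finset.card_range]
  have hp : x j ^ m = x j ^ ((i : ℕ) + 1) * x j ^ (m - 1 - (i : ℕ)) := by
    rw [← pow_add]; congr 1; omega
  rw [hp]
  ring

/-- The common generalization of Theorems 2.1 and 2.2 of Lai and Rohatgi: the determinant of
the matrix with `(i,j)`-entry the lattice-path generating function
`gf(2i−1, i−1, 2m−1+k, a_j) = 2^{2i-k-2m} q^{(2i-k-2m)(2i+k+2m-4a_j-3)/2}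
  (q^{4(i-a_j)}; q⁴)_{2m+k-2i} / (q²; q²)_{2m+k-2i}`
factors completely (indices shifted: `i : Fin m` is the mathematical index `i + 1`). -/
theorem det_quarter_hexagon {F : Type*} [Field F] (q : F) (hq : q ≠ 0) (h2 : (2 : F) ≠ 0)
    (hroot : ∀ n : ℕ, 1 ≤ n → q ^ (2 * n) ≠ 1)
    (m k : ℕ) (hm : 1 ≤ m) (a : Fin m → ℤ) (ha : StrictMono a) :
    Matrix.det (Matrix.of fun i j : Fin m =>
        (2 : F) ^ (2 * ((i : ℤ) + 1) - k - 2 * m)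
          * q ^ ((2 * ((i : ℤ) + 1) - k - 2 * m)
                  * (2 * ((i : ℤ) + 1) + k + 2 * m - 4 * a j - 3) / 2)
          * qPoch (q ^ (4 * (((i : ℤ) + 1) - a j))) (q ^ 4) (2 * m + k - 2 * ((i : ℕ) + 1))
          / qPoch (q ^ 2) (q ^ 2) (2 * m + k - 2 * ((i : ℕ) + 1)))
      = (∏ i : Fin m,
            (2 : F) ^ (2 * ((i : ℤ) + 1) - k - 2 * m)
              * q ^ ((2 * ((i : ℤ) + 1) - k - 2 * m) * (2 * ((i : ℤ) + 1) + k + 2 * m - 3) / 2)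
              / qPoch (q ^ 2) (q ^ 2) (2 * m + k - 2 * ((i : ℕ) + 1)))
        * (∏ j : Fin m, q ^ (2 * a j * (k + 2 * (m : ℤ))))
        * q ^ (4 * (((m * (m - 1) * (2 * m + k - 1) / 2 : ℕ) : ℤ)
                      - ∑ l : Fin m, a l * (2 * (m : ℤ) - ((l : ℕ) + 1))))
        * (∏ j : Fin m, qPoch (q ^ (4 * ((m : ℤ) - a j))) (q ^ 4) k)
        * ∏ i : Fin m, ∏ j ∈ Finset.Ioi i,
            (1 - q ^ (4 * (a i - a j)))
              * (1 - q ^ (4 * (-(2 * (m : ℤ)) - k + 1 + a i + a j))) := by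
  set x : Fin m → F := fun j => q ^ (-4 * a j) with hxdef
  set c : Fin m → F := fun i => (2 : F) ^ (2 * ((i : ℤ) + 1) - k - 2 * m)
              * q ^ ((2 * ((i : ℤ) + 1) - k - 2 * m) * (2 * ((i : ℤ) + 1) + k + 2 * m - 3) / 2)
              / qPoch (q ^ 2) (q ^ 2) (2 * m + k - 2 * ((i : ℕ) + 1)) with hc
  have hx : ∀ j, x j ≠ 0 := fun j => zpow_ne_zero _ hq
  have hQ : ∀ n : ℕ, (q ^ 4) ^ n = q ^ (4 * (n : ℤ)) := by
    intro n; rw [← pow_mul, ← zpow_natCast]; push_cast; rfl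
  have hxp : ∀ j (n : ℕ), x j ^ n = q ^ (-4 * a j * n) := by
    intro j n; rw [hxdef, ← zpow_natCast, ← zpow_mul]
  have hxQ : ∀ j (n : ℕ), x j * (q ^ 4) ^ n = q ^ (4 * ((n : ℤ) - a j)) := by
    intro j n; rw [hQ, hxdef, ← zpow_add₀ hq]; congr 1; ring
  have hM : (Matrix.of fun i j : Fin m =>
        (2 : F) ^ (2 * ((i : ℤ) + 1) - k - 2 * m)
          * q ^ ((2 * ((i : ℤ) + 1) - k - 2 * m)
                  * (2 * ((i : ℤ) + 1) + k + 2 * m - 4 * a j - 3) / 2)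
          * qPoch (q ^ (4 * (((i : ℤ) + 1) - a j))) (q ^ 4) (2 * m + k - 2 * ((i : ℕ) + 1))
          / qPoch (q ^ 2) (q ^ 2) (2 * m + k - 2 * ((i : ℕ) + 1)))
      = Matrix.of fun i j : Fin m => c i * (Matrix.of fun i j : Fin m =>
          q ^ (2 * a j * (k + 2 * (m : ℤ))) * (Matrix.of fun i j : Fin m =>
        x j ^ ((i : ℕ) + 1) * qPoch (x j * (q ^ 4) ^ ((i : ℕ) + 1)) (q ^ 4)
          (2 * m + k - 2 * ((i : ℕ) + 1))) i j) i j := by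
    ext i j
    simp only [Matrix.of_apply]
    have he : (2 * ((i : ℤ) + 1) - k - 2 * m) * (2 * ((i : ℤ) + 1) + k + 2 * m - 4 * a j - 3) / 2
        = (2 * ((i : ℤ) + 1) - k - 2 * m) * (2 * ((i : ℤ) + 1) + k + 2 * m - 3) / 2
          + (2 * a j * (k + 2 * (m : ℤ)) + -4 * a j * ((i : ℕ) + 1 : ℕ)) := by
      rw [← Int.add_mul_ediv_right _ _ (by norm_num)]
      congr 1
      push_cast
      ring
    rw [he, zpow_add₀ hq, zpow_add₀ hq, hxQ, hxp, hc]
    push_cast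
    ring
  rw [hM, Matrix.det_mul_column, Matrix.det_mul_row, det_core _ _ _ _ hx, Finset.prod_mul_distrib]
  have hpair : ∀ i j : Fin m,
      (((x i)⁻¹ + x i * (q ^ 4) ^ (2 * m + k - 1)) - ((x j)⁻¹ + x j * (q ^ 4) ^ (2 * m + k - 1)))
      = q ^ (-4 * a i + 4 * (2 * (m : ℤ) + k - 1)) * ((1 - q ^ (4 * (a i - a j)))
          * (1 - q ^ (4 * (-(2 * (m : ℤ)) - k + 1 + a i + a j)))) := by
    intro i j
    have hN : (q ^ 4) ^ (2 * m + k - 1) = q ^ (4 * (2 * (m : ℤ) + k - 1)) := by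
      rw [hQ]; congr 1; omega
    have h1 : q ^ (4 * (a i - a j)) = x j / x i := by
      rw [hxdef, ← zpow_sub₀ hq]; congr 1; ring
    have h3 : q ^ (4 * (-(2 * (m : ℤ)) - k + 1 + a i + a j))
        = (x i * x j * q ^ (4 * (2 * (m : ℤ) + k - 1)))⁻¹ := by
      rw [hxdef, ← zpow_add₀ hq, ← zpow_add₀ hq, ← zpow_neg]; congr 1; ring
    have hne : q ^ (4 * (2 * (m : ℤ) + k - 1)) ≠ 0 := zpow_ne_zero _ hq
    rw [h3, h1, hN, zpow_add₀ hq, show q ^ (-4 * a i) = x i from rfl]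
    have hi := hx i
    have hj := hx j
    field_simp
    ring
  have hpow : (∏ j, x j ^ m)
      * q ^ (∑ i : Fin m, -4 * a i * ((m : ℤ) - 1 - i)
        + ((m * (m - 1) / 2 : ℕ) : ℤ) * (4 * (2 * (m : ℤ) + k - 1)))
      = q ^ (4 * (((m * (m - 1) * (2 * m + k - 1) / 2 : ℕ) : ℤ)
                      - ∑ l : Fin m, a l * (2 * (m : ℤ) - ((l : ℕ) + 1)))) := by
    have hprod : ∀ s : Finset (Fin m), ∏ j ∈ s, x j ^ m = q ^ ∑ j ∈ s, -4 * a j * m := by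
      intro s
      induction s using Finset.induction_on with
      | empty => simp
      | insert b s hb ih =>
        rw [Finset.prod_insert hb, Finset.sum_insert hb, ih, zpow_add₀ hq, hxp]
    -- `m (m - 1)` is even, so the division by 2 commutes with multiplication by `2m + k - 1`.
    have hdiv : m * (m - 1) * (2 * m + k - 1) / 2 = m * (m - 1) / 2 * (2 * m + k - 1) :=
      Nat.div_mul_right_comm (Nat.even_mul_pred_self m).two_dvd _ |>.symm
    rw [hprod, ← zpow_add₀ hq, hdiv]
    congr 1
    have hsum : ∑ l : Fin m, (-4 * a l * m + -4 * a l * ((m : ℤ) - 1 - l))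
        = -4 * ∑ l : Fin m, a l * (2 * (m : ℤ) - ((l : ℕ) + 1)) := by
      rw [Finset.mul_sum]
      refine Finset.sum_congr rfl fun i _ => ?_
      ring
    rw [← add_assoc, ← Finset.sum_add_distrib, hsum, Nat.cast_mul,
      show ((2 * m + k - 1 : ℕ) : ℤ) = 2 * (m : ℤ) + k - 1 by omega]
    ring
  simp only [hpair]
  simp only [hxQ, Finset.prod_mul_distrib]
  rw [prod_pairs_zpow q hq m (fun i => -4 * a i), ← hpow]
  ring
end
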